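/- For each k ∈ ℕ with k ≥ 1, define Γ_k = { (1/3^k) · Σ_{j=k−1}^{p} a_j 4^j : p ∈ ℕ, p ≥ k−1, each a_j ∈ {0,1} } ∪ {0}. Then for every pair of distinct elements γ, γ' ∈ Γ_k, the difference γ − γ' lies in 𝒪 = {4^{n−1}(2m+1)/3ⁿ : n ∈ ℕ₀, m ∈ ℤ}; hence {e_γ : γ ∈ Γ_k} is a mutually orthogonal family of exponentials with respect to ν_{3/4}. -/

import Mathlib

/-!
Elements of `Γ_k` are sums of distinct powers `4 ^ j`, `j ≥ k - 1`, divided by `3 ^ k`. In the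
difference of two such sums the lowest exponent `l` that does not cancel dominates 2-adically, so
the difference is `4 ^ l` times an odd integer. Multiplying that integer by a power of `3` adjusts
the denominator and places the quotient in `𝒪`.

For `ν̂(t) = ∫ exp(itx) dν(x)`, invariance of `ν` reads `ν̂(t) = cos t · ν̂(3t/4)`. Iterating, `ν̂`
vanishes at `t` as soon as `cos ((3/4)ⁿ t) = 0` for some `n`, and the points `2πt` with `t ∈ 𝒪` are
exactly those for which this happens.
-/

open MeasureTheory
open scoped ENNReal

/-- The set `𝒪 = {4^{n−1}(2m+1)/3ⁿ : n ∈ ℕ₀, m ∈ ℤ} = {(1/4)(4/3)ⁿ(2m+1) : n ∈ ℕ₀, m ∈ ℤ}`. -/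
def OsetThreeFourths : Set ℝ :=
  {x : ℝ | ∃ (n : ℕ) (m : ℤ), x = (1 / 4) * (4 / 3 : ℝ) ^ n * (2 * (m : ℝ) + 1)}

/-- The set `Γ_k = {(1/3^k) Σ_{j=k−1}^{p} a_j 4^j : p finite, a_j ∈ {0,1}} ∪ {0}`. -/
def GamSet (k : ℕ) : Set ℝ :=
  {x : ℝ | ∃ p : ℕ, k - 1 ≤ p ∧ ∃ a : ℕ → ℕ, (∀ j, a j = 0 ∨ a j = 1) ∧
    x = (1 / (3 : ℝ) ^ k) * ∑ j ∈ Finset.Icc (k - 1) p, (a j : ℝ) * (4 : ℝ) ^ j} ∪ {0}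

section OddMultiples

open Finset

lemma exists_odd_sum_mul_pow_eq {R : Type*} [CommSemiring R] {b : R} (hb : Even b) (s : Finset ℕ)
    (c : ℕ → R) (hc : ∀ j ∈ s, c j = 0 ∨ Odd (c j)) (hsum : ∑ j ∈ s, c j * b ^ j ≠ 0) :
    ∃ l ∈ s, ∃ m, Odd m ∧ ∑ j ∈ s, c j * b ^ j = b ^ l * m := by
  induction s using Finset.induction_on_min with
  | empty => simp at hsum
  | insert l s hl ih =>
    have hls : l ∉ s := fun h => (hl l h).false
    rw [sum_insert hls] at hsum ⊢
    rcases hc l (mem_insert_self l s) with hzero | hodd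
    · rw [hzero, zero_mul, zero_add] at hsum ⊢
      obtain ⟨i, hi, m, hm⟩ := ih (fun j hj => hc j (mem_insert_of_mem hj)) hsum
      exact ⟨i, mem_insert_of_mem hi, m, hm⟩
    · have hdvd : b ^ (l + 1) ∣ ∑ j ∈ s, c j * b ^ j :=
        dvd_sum fun j hj => (pow_dvd_pow b (hl j hj)).mul_left (c j)
      obtain ⟨q, hq⟩ := hdvd
      refine ⟨l, mem_insert_self l s, c l + b * q, hodd.add_even (hb.mul_right q), ?_⟩
      rw [hq]
      ring

lemma exists_odd_sum_pow_sub_sum_pow_eq {R : Type*} [CommRing R] {b : R} (hb : Even b)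
    {s t : Finset ℕ} (hne : ∑ j ∈ s, b ^ j ≠ ∑ j ∈ t, b ^ j) :
    ∃ l ∈ s ∪ t, ∃ m, Odd m ∧ ∑ j ∈ s, b ^ j - ∑ j ∈ t, b ^ j = b ^ l * m := by
  let c : ℕ → R := fun j => (if j ∈ s then 1 else 0) - if j ∈ t then 1 else 0
  have hc (j : ℕ) : c j = 0 ∨ Odd (c j) := by
    by_cases hs : j ∈ s <;> by_cases ht : j ∈ t <;> simp [c, hs, ht]
  have hdiff : ∑ j ∈ s, b ^ j - ∑ j ∈ t, b ^ j = ∑ j ∈ s ∪ t, c j * b ^ j := by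
    simp only [c, sub_mul, ite_mul, one_mul, zero_mul, sum_sub_distrib, sum_ite_mem,
      union_inter_cancel_left, union_inter_cancel_right]
  rw [hdiff]
  exact exists_odd_sum_mul_pow_eq hb _ c (fun j _ => hc j) (hdiff ▸ sub_ne_zero.mpr hne)

end OddMultiples

lemma exists_finset_of_mem_gamSet {k : ℕ} {x : ℝ} (hx : x ∈ GamSet k) :
    ∃ s : Finset ℕ, (∀ j ∈ s, k ≤ j + 1) ∧ x = (∑ j ∈ s, (4 : ℤ) ^ j : ℤ) / 3 ^ k := by
  rcases hx with ⟨p, -, a, ha, rfl⟩ | rfl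
  · refine ⟨(Finset.Icc (k - 1) p).filter (a · = 1), fun j hj => ?_, ?_⟩
    · have hkj : k - 1 ≤ j := (Finset.mem_Icc.mp (Finset.mem_filter.mp hj).1).1
      omega
    · have hterm (j : ℕ) : (a j : ℝ) * 4 ^ j = if a j = 1 then 4 ^ j else 0 := by
        rcases ha j with h | h <;> simp [h]
      simp only [hterm, ← Finset.sum_filter]
      push_cast
      ring
  · exact ⟨∅, by simp, by simp⟩

lemma four_pow_mul_odd_div_three_pow_mem_osetThreeFourths {k l : ℕ} (hkl : k ≤ l + 1)
    {m : ℤ} (hm : Odd m) : (4 ^ l * m : ℝ) / 3 ^ k ∈ OsetThreeFourths := by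
  obtain ⟨d, hd⟩ := Nat.exists_eq_add_of_le hkl
  obtain ⟨q, hq⟩ : Odd (3 ^ d * m) := (Odd.pow (by decide)).mul hm
  have hq' : (3 ^ d * m : ℝ) = 2 * q + 1 := by exact_mod_cast hq
  have hpow : (3 : ℝ) ^ (l + 1) = 3 ^ k * 3 ^ d := by rw [hd, pow_add]
  refine ⟨l + 1, q, ?_⟩
  rw [← hq', div_pow, hpow]
  field_simp
  ring

theorem gamSet_sub_mem_osetThreeFourths {k : ℕ} {γ γ' : ℝ} (hγ : γ ∈ GamSet k)
    (hγ' : γ' ∈ GamSet k) (hne : γ ≠ γ') : γ - γ' ∈ OsetThreeFourths := by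
  obtain ⟨s, hs, rfl⟩ := exists_finset_of_mem_gamSet hγ
  obtain ⟨t, ht, rfl⟩ := exists_finset_of_mem_gamSet hγ'
  have hsum : ∑ j ∈ s, (4 : ℤ) ^ j ≠ ∑ j ∈ t, (4 : ℤ) ^ j := fun h => hne (by rw [h])
  obtain ⟨l, hl, m, hm, hdiff⟩ := exists_odd_sum_pow_sub_sum_pow_eq (by decide) hsum
  have hkl : k ≤ l + 1 := (Finset.mem_union.mp hl).elim (hs l) (ht l)
  rw [← sub_div, ← Int.cast_sub, hdiff]
  exact_mod_cast four_pow_mul_odd_div_three_pow_mem_osetThreeFourths hkl hm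

section CharFun

variable {E : Type*} [MeasurableSpace E]

lemma charFun_smul_measure [Inner ℝ E] (c : ℝ≥0∞) (μ : Measure E) (t : E) :
    charFun (c • μ) t = c.toReal * charFun μ t := by
  rw [charFun_apply, integral_smul_measure, Complex.real_smul, charFun_apply]

lemma charFun_add_measure [SeminormedAddCommGroup E] [InnerProductSpace ℝ E]
    [OpensMeasurableSpace E] (μ ν : Measure E) [IsFiniteMeasure μ] [IsFiniteMeasure ν] (t : E) :
    charFun (μ + ν) t = charFun μ t + charFun ν t := by
  simp only [charFun_eq_integral_innerProbChar]
  exact integral_add_measure (BoundedContinuousFunction.integrable _ _)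
    (BoundedContinuousFunction.integrable _ _)

lemma charFun_map_smul_add_const [NormedAddCommGroup E] [InnerProductSpace ℝ E] [BorelSpace E]
    (μ : Measure E) (r : ℝ) (c t : E) :
    charFun (μ.map fun x => r • x + c) t =
      charFun μ (r • t) * Complex.exp (inner ℝ c t * Complex.I) := by
  have hmap : μ.map (fun x => r • x + c) = (μ.map (r • ·)).map (· + c) := by
    rw [Measure.map_map (by fun_prop) (by fun_prop), Function.comp_def]
  rw [hmap, charFun_map_add_const, charFun_map_smul]

end CharFun

lemma integral_exp_mul_conj_exp_eq_charFun (ν : Measure ℝ) (γ γ' : ℝ) :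
    ∫ x : ℝ, Complex.exp (2 * Real.pi * Complex.I * γ * x)
        * (starRingEnd ℂ) (Complex.exp (2 * Real.pi * Complex.I * γ' * x)) ∂ν =
      charFun ν (2 * Real.pi * (γ - γ')) := by
  rw [charFun_apply_real]
  congr with x
  rw [← Complex.exp_conj, ← Complex.exp_add]
  simp only [map_mul, Complex.conj_I, Complex.conj_ofReal, map_ofNat]
  push_cast
  ring_nf

/-- `ν` is invariant under the iterated function system `x ↦ r x ± 1` with equal weights. For
`0 < r < 1` the only such probability measure is the Bernoulli convolution `ν_r`; the total mass of
`ν` is not prescribed here. -/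
def IsBernoulliInvariant (r : ℝ) (ν : Measure ℝ) : Prop :=
  ν = (1 / 2 : ℝ≥0∞) • ν.map (fun x => r * x + 1) + (1 / 2 : ℝ≥0∞) • ν.map (fun x => r * x - 1)

namespace IsBernoulliInvariant

variable {r : ℝ} {ν : Measure ℝ} [IsFiniteMeasure ν]

lemma charFun_eq_cos_mul (hν : IsBernoulliInvariant r ν) (t : ℝ) :
    charFun ν t = Real.cos t * charFun ν (r * t) := by
  have hplus : charFun (ν.map fun x => r * x + 1) t =
      charFun ν (r * t) * Complex.exp (t * Complex.I) := by
    simpa using charFun_map_smul_add_const ν r 1 t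
  have hminus : charFun (ν.map fun x => r * x - 1) t =
      charFun ν (r * t) * Complex.exp (-t * Complex.I) := by
    simpa [sub_eq_add_neg] using charFun_map_smul_add_const ν r (-1) t
  have : IsFiniteMeasure ((1 / 2 : ℝ≥0∞) • ν.map fun x => r * x + 1) :=
    Measure.smul_finite _ (by simp)
  have : IsFiniteMeasure ((1 / 2 : ℝ≥0∞) • ν.map fun x => r * x - 1) :=
    Measure.smul_finite _ (by simp)
  conv_lhs => rw [hν]
  rw [charFun_add_measure, charFun_smul_measure, charFun_smul_measure, hplus, hminus,
    Complex.ofReal_cos, Complex.cos]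
  simp only [one_div, ENNReal.toReal_inv, ENNReal.toReal_ofNat]
  push_cast
  ring

lemma charFun_eq_zero_of_cos_eq_zero (hν : IsBernoulliInvariant r ν) {t : ℝ} {n : ℕ}
    (hcos : Real.cos (r ^ n * t) = 0) : charFun ν t = 0 := by
  induction n generalizing t with
  | zero =>
    rw [pow_zero, one_mul] at hcos
    rw [hν.charFun_eq_cos_mul, hcos, Complex.ofReal_zero, zero_mul]
  | succ n ih =>
    rw [pow_succ, mul_assoc] at hcos
    rw [hν.charFun_eq_cos_mul, ih hcos, mul_zero]

lemma charFun_eq_zero_of_mem_osetThreeFourths (hν : IsBernoulliInvariant (3 / 4) ν) {t : ℝ}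
    (ht : t ∈ OsetThreeFourths) : charFun ν (2 * Real.pi * t) = 0 := by
  obtain ⟨n, m, rfl⟩ := ht
  refine hν.charFun_eq_zero_of_cos_eq_zero (n := n) (Real.cos_eq_zero_iff.mpr ⟨m, ?_⟩)
  have hcancel : (3 / 4 : ℝ) ^ n * (4 / 3) ^ n = 1 := by
    rw [← mul_pow]
    norm_num
  linear_combination (2 * m + 1) * Real.pi / 2 * hcancel

end IsBernoulliInvariant

/-- For each `k ≥ 1` and distinct `γ, γ' ∈ Γ_k`, the difference `γ − γ'` lies in `𝒪`;
hence `{e_γ : γ ∈ Γ_k}` is a mutually orthogonal family of exponentials with respect to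
the Bernoulli convolution measure `ν_{3/4}`. -/
theorem gamSet_orthogonal_family
    (ν : Measure ℝ) [IsProbabilityMeasure ν]
    (hatom : ∀ x : ℝ, ν {x} = 0)
    (hinv : ν = (1 / 2 : ℝ≥0∞) • Measure.map (fun x : ℝ => (3 / 4 : ℝ) * x + 1) ν
              + (1 / 2 : ℝ≥0∞) • Measure.map (fun x : ℝ => (3 / 4 : ℝ) * x - 1) ν)
    (k : ℕ) (hk : 1 ≤ k) :
    (∀ γ ∈ GamSet k, ∀ γ' ∈ GamSet k, γ ≠ γ' → γ - γ' ∈ OsetThreeFourths) ∧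
    (∀ γ ∈ GamSet k, ∀ γ' ∈ GamSet k, γ ≠ γ' →
      (∫ x : ℝ, Complex.exp (2 * Real.pi * Complex.I * γ * x)
        * (starRingEnd ℂ) (Complex.exp (2 * Real.pi * Complex.I * γ' * x)) ∂ν) = 0) := by
  have hdiff : ∀ γ ∈ GamSet k, ∀ γ' ∈ GamSet k, γ ≠ γ' → γ - γ' ∈ OsetThreeFourths :=
    fun _ hγ _ hγ' hne => gamSet_sub_mem_osetThreeFourths hγ hγ' hne
  have hν : IsBernoulliInvariant (3 / 4) ν := hinv
  refine ⟨hdiff, fun γ hγ γ' hγ' hne => ?_⟩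
  rw [integral_exp_mul_conj_exp_eq_charFun]
  exact hν.charFun_eq_zero_of_mem_osetThreeFourths (hdiff γ hγ γ' hγ' hne)
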